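/- Let H be a real or complex Hilbert space, n ∈ ℕ, and let ψ be a word over n letters, i.e. a finite sequence (i_1, …, i_r) with each i_j ∈ {1, …, n}. For each i ∈ {1, …, n}, let A_i, B_i and E be contractions (bounded linear operators of norm at most 1) on H, and assume each A_i commutes with E. Then ‖ψ(A₁,…,A_n)E − ψ(B₁,…,B_n)E‖ ≤ Σ_{i=1}^{n} |ψ_i| · ‖A_iE − B_iE‖, where ψ(A₁,…,A_n) = A_{i_r} ⋯ A_{i_1} and |ψ_i| is the number of occurrences of the letter i in ψ. -/

import Mathlib

/-!
Along a word `i :: l`, the difference of products telescopes as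
`a i * P * e - b i * Q * e = (a i * e - b i * e) * P + b i * (P * e - Q * e)`,
where `P` and `Q` are the products along `l` of the `a`s and of the `b`s; this uses that `P`
commutes with `e`. Since `‖a i‖, ‖b i‖ ≤ 1`, each letter contributes at most `‖a i * e - b i * e‖`.
-/

open Filter Topology

/-- Applying a word `ψ = (i₁, …, i_r)` over `n` letters to operators `A 1, …, A n`:
`ψ(A₁, …, A_n) = A_{i_r} ⋯ A_{i_1}`. -/
noncomputable def wordApply {𝕜 H : Type*} [RCLike 𝕜] [NormedAddCommGroup H]
    [InnerProductSpace 𝕜 H] {n : ℕ} (A : Fin n → H →L[𝕜] H) (ψ : List (Fin n)) :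
    H →L[𝕜] H :=
  (ψ.map A).reverse.prod

section SeminormedRing

variable {ι R : Type*} [SeminormedRing R]

/- The factor `x` is there because `‖l.prod‖ ≤ 1` can fail for `l = []`: nothing bounds `‖1‖`. -/
theorem norm_mul_list_prod_le {l : List R} (hl : ∀ a ∈ l, ‖a‖ ≤ 1) (x : R) :
    ‖x * l.prod‖ ≤ ‖x‖ := by
  induction l generalizing x with
  | nil => simp
  | cons a l ih =>
    rw [List.forall_mem_cons] at hl
    calc ‖x * (a :: l).prod‖ = ‖x * a * l.prod‖ := by rw [List.prod_cons, mul_assoc]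
      _ ≤ ‖x * a‖ := ih hl.2 _
      _ ≤ ‖x‖ := (norm_mul_le _ _).trans (mul_le_of_le_one_right (norm_nonneg _) hl.1)

theorem norm_list_prod_map_mul_sub_le {a b : ι → R} {e : R} {l : List ι}
    (ha : ∀ i ∈ l, ‖a i‖ ≤ 1) (hb : ∀ i ∈ l, ‖b i‖ ≤ 1) (hcomm : ∀ i ∈ l, Commute (a i) e) :
    ‖(l.map a).prod * e - (l.map b).prod * e‖ ≤ (l.map fun i ↦ ‖a i * e - b i * e‖).sum := by
  induction l with
  | nil => simp
  | cons i l ih =>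
    rw [List.forall_mem_cons] at ha hb hcomm
    simp only [List.map_cons, List.prod_cons, List.sum_cons]
    set P := (l.map a).prod
    set Q := (l.map b).prod
    have commute_P : Commute P e :=
      Commute.list_prod_left _ _ (List.forall_mem_map.2 hcomm.2)
    have telescope :
        a i * P * e - b i * Q * e = (a i * e - b i * e) * P + b i * (P * e - Q * e) := by
      simp only [sub_mul, mul_sub, mul_assoc, commute_P.eq]
      abel
    have head_le : ‖(a i * e - b i * e) * P‖ ≤ ‖a i * e - b i * e‖ :=
      norm_mul_list_prod_le (List.forall_mem_map.2 ha.2) _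
    have tail_le : ‖b i * (P * e - Q * e)‖ ≤ ‖P * e - Q * e‖ :=
      (norm_mul_le _ _).trans (mul_le_of_le_one_left (norm_nonneg _) hb.1)
    rw [telescope]
    exact norm_add_le_of_le head_le (tail_le.trans (ih ha.2 hb.2 hcomm.2))

end SeminormedRing

theorem list_sum_map_eq_sum_count_nsmul {ι M : Type*} [Fintype ι] [DecidableEq ι]
    [AddCommMonoid M] (l : List ι) (f : ι → M) :
    (l.map f).sum = ∑ i, l.count i • f i := by
  rw [Finset.sum_list_map_count]
  refine Finset.sum_subset (Finset.subset_univ _) fun i _ hi ↦ ?_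
  rw [List.count_eq_zero_of_not_mem (mt List.mem_toFinset.2 hi), zero_nsmul]

theorem word_contraction_inequality_general {ι R : Type*} [Fintype ι] [DecidableEq ι]
    [SeminormedRing R] (ψ : List ι) (A B : ι → R) (E : R)
    (hA : ∀ i ∈ ψ, ‖A i‖ ≤ 1) (hB : ∀ i ∈ ψ, ‖B i‖ ≤ 1) (hcomm : ∀ i ∈ ψ, Commute (A i) E) :
    ‖(ψ.map A).reverse.prod * E - (ψ.map B).reverse.prod * E‖ ≤
      ∑ i, (ψ.count i : ℝ) * ‖A i * E - B i * E‖ := by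
  simp only [← List.mem_reverse (as := ψ)] at hA hB hcomm
  simp only [← List.map_reverse, ← nsmul_eq_mul, ← List.count_reverse (l := ψ)]
  rw [← list_sum_map_eq_sum_count_nsmul]
  exact norm_list_prod_map_mul_sub_le hA hB hcomm

/-- **Continuous dependence of words on letters.** If `A i`, `B i`, `E` are
contractions and each `A i` commutes with `E`, then
`‖ψ(A₁,…,A_n)E − ψ(B₁,…,B_n)E‖ ≤ ∑ᵢ |ψᵢ| ‖AᵢE − BᵢE‖`,
where `|ψᵢ|` is the number of occurrences of the letter `i` in the word `ψ`. -/
theorem word_contraction_inequality {𝕜 H : Type*} [RCLike 𝕜]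
    [NormedAddCommGroup H] [InnerProductSpace 𝕜 H] [CompleteSpace H]
    {n : ℕ} (ψ : List (Fin n)) (A B : Fin n → H →L[𝕜] H) (E : H →L[𝕜] H)
    (hA : ∀ i, ‖A i‖ ≤ 1) (hB : ∀ i, ‖B i‖ ≤ 1) (hE : ‖E‖ ≤ 1)
    (hcomm : ∀ i, A i * E = E * A i) :
    ‖wordApply A ψ * E - wordApply B ψ * E‖ ≤
      ∑ i : Fin n, (ψ.count i : ℝ) * ‖A i * E - B i * E‖ :=
  word_contraction_inequality_general ψ A B E (fun i _ ↦ hA i) (fun i _ ↦ hB i) fun i _ ↦ hcomm i
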